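/- The operators on W satisfy the quantum Cartan–Kac anticommutation relation {E23, E32} = [h2] with h2 = E22 + E33: for every basis vector v(k, m11), (E23 E32 + E32 E23) v(k, m11) = [m12 + m22 + m32 − m11] · v(k, m11), where (m12, m22, m32) is the triple attached to k and m12 + m22 + m32 − m11 is the eigenvalue of E22 + E33 on v(k, m11). -/

import Mathlib

/-!
Write `a = [x - m23 + 1]`, `b = [m13 - x]`, `c = [m13 - m23 + 1]`, `d = [m13 - m23]`,
`A = [m23 + m33]`, `B = [m13 + m33 + 1]` with `x = m11`. In all four sectors the eigenvalue of
`E22 + E33` is the same integer `m13 + m23 + m33 - x`, and the diagonal coefficient of `{E23, E32}`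
works out to `(a A + b B) / c`. The relation therefore reduces to the `q`-number identity
`a A + b B = c [m13 + m23 + m33 - x]` (`qn_identity`); in sectors `1` and `2` the
off-diagonal terms cancel because `√(b/c) √(a d) = √(a/c) √(b d)` and similarly with `1/d`.

All of `a, b, c, d` are nonnegative on the relevant ranges (`qn_nonneg`), so every square root of
a product or quotient splits. A basis vector leaves the range of a neighbouring sector only at
`x = m13`, where `b = 0`, or at `x = m23 - 1`, where `a = 0`; its coefficient vanishes there, and
these boundary values of `x` are treated separately.
-/


noncomputable section

/-- The `q`-number `[x] = (q^x - q^(-x))/(q - q⁻¹)`. -/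
def qn (q : ℝ) (x : ℤ) : ℝ := (q ^ x - q ^ (-x)) / (q - q⁻¹)

/-- The triple `(m12, m22, m32)` attached to the sector `k ∈ {0,1,2,3}`. -/
def trip (m13 m23 m33 : ℤ) : Fin 4 → ℤ × ℤ × ℤ
  | 0 => (m13, m23, m33)
  | 1 => (m13, m23 - 1, m33 + 1)
  | 2 => (m13 - 1, m23, m33 + 1)
  | 3 => (m13 - 1, m23 - 1, m33 + 2)

def M12 (m13 m23 m33 : ℤ) (k : Fin 4) : ℤ := (trip m13 m23 m33 k).1
def M22 (m13 m23 m33 : ℤ) (k : Fin 4) : ℤ := (trip m13 m23 m33 k).2.1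
def M32 (m13 m23 m33 : ℤ) (k : Fin 4) : ℤ := (trip m13 m23 m33 k).2.2

/-- `m11` is in the allowed range `m22 ≤ m11 ≤ m12` of the sector `k`. -/
def InR (m13 m23 m33 : ℤ) (k : Fin 4) (x : ℤ) : Prop :=
  M22 m13 m23 m33 k ≤ x ∧ x ≤ M12 m13 m23 m33 k

instance (m13 m23 m33 : ℤ) (k : Fin 4) (x : ℤ) : Decidable (InR m13 m23 m33 k x) :=
  instDecidableAnd

/-- The index set of the basis `v(k, m11)` of `W`. -/
abbrev Idx (m13 m23 m33 : ℤ) : Type :=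
  {p : Fin 4 × ℤ // InR m13 m23 m33 p.1 p.2}

/-- The module `W = W^q([m13,m23,m33])`, realized as the free complex vector
space on the basis `v(k, m11)`, `k ∈ {0,1,2,3}`, `m22 ≤ m11 ≤ m12`. -/
abbrev Wsp (m13 m23 m33 : ℤ) : Type := Idx m13 m23 m33 →₀ ℂ

/-- The basis vector `v(k, m11)` (zero if `m11` is out of range). -/
def bv (m13 m23 m33 : ℤ) (k : Fin 4) (x : ℤ) : Wsp m13 m23 m33 :=
  if h : InR m13 m23 m33 k x then Finsupp.single ⟨(k, x), h⟩ 1 else 0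

/-- The sector `V_k`, the span of the `v(k, ·)`. -/
def Vk (m13 m23 m33 : ℤ) (k : Fin 4) : Submodule ℂ (Wsp m13 m23 m33) :=
  Submodule.span ℂ (Set.range (bv m13 m23 m33 k))

/-- The Gel'fand--Zetlin realization of the induced `U_q[gl(2/1)]`-module
`W^q([m13,m23,m33])`: seven linear operators acting on the basis `v(k, m11)`
by the stated formulas (terms with `m11` out of range being `0`). -/
structure GZ (q : ℝ) (m13 m23 m33 : ℤ) where
  E11 : Wsp m13 m23 m33 →ₗ[ℂ] Wsp m13 m23 m33
  E22 : Wsp m13 m23 m33 →ₗ[ℂ] Wsp m13 m23 m33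
  E33 : Wsp m13 m23 m33 →ₗ[ℂ] Wsp m13 m23 m33
  E12 : Wsp m13 m23 m33 →ₗ[ℂ] Wsp m13 m23 m33
  E21 : Wsp m13 m23 m33 →ₗ[ℂ] Wsp m13 m23 m33
  E23 : Wsp m13 m23 m33 →ₗ[ℂ] Wsp m13 m23 m33
  E32 : Wsp m13 m23 m33 →ₗ[ℂ] Wsp m13 m23 m33
  hE11 : ∀ (k : Fin 4) (x : ℤ), InR m13 m23 m33 k x →
    E11 (bv m13 m23 m33 k x) = (x : ℂ) • bv m13 m23 m33 k x
  hE22 : ∀ (k : Fin 4) (x : ℤ), InR m13 m23 m33 k x →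
    E22 (bv m13 m23 m33 k x) =
      ((M12 m13 m23 m33 k + M22 m13 m23 m33 k - x : ℤ) : ℂ) • bv m13 m23 m33 k x
  hE33 : ∀ (k : Fin 4) (x : ℤ), InR m13 m23 m33 k x →
    E33 (bv m13 m23 m33 k x) = ((M32 m13 m23 m33 k : ℤ) : ℂ) • bv m13 m23 m33 k x
  hE12 : ∀ (k : Fin 4) (x : ℤ), InR m13 m23 m33 k x →
    E12 (bv m13 m23 m33 k x) =
      ((Real.sqrt (qn q (M12 m13 m23 m33 k - x) * qn q (x - M22 m13 m23 m33 k + 1)) : ℝ) : ℂ) •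
        bv m13 m23 m33 k (x + 1)
  hE21 : ∀ (k : Fin 4) (x : ℤ), InR m13 m23 m33 k x →
    E21 (bv m13 m23 m33 k x) =
      ((Real.sqrt (qn q (M12 m13 m23 m33 k - x + 1) * qn q (x - M22 m13 m23 m33 k)) : ℝ) : ℂ) •
        bv m13 m23 m33 k (x - 1)
  hE23₀ : ∀ x : ℤ, InR m13 m23 m33 0 x → E23 (bv m13 m23 m33 0 x) = 0
  hE23₁ : ∀ x : ℤ, InR m13 m23 m33 1 x →
    E23 (bv m13 m23 m33 1 x) =
      ((Real.sqrt (qn q (x - m23 + 1) / qn q (m13 - m23 + 1)) * qn q (m23 + m33) : ℝ) : ℂ) •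
        bv m13 m23 m33 0 x
  hE23₂ : ∀ x : ℤ, InR m13 m23 m33 2 x →
    E23 (bv m13 m23 m33 2 x) =
      ((Real.sqrt (qn q (m13 - x) / qn q (m13 - m23)) * qn q (m13 + m33 + 1) : ℝ) : ℂ) •
        bv m13 m23 m33 0 x
  hE23₃ : ∀ x : ℤ, InR m13 m23 m33 3 x →
    E23 (bv m13 m23 m33 3 x) =
      ((q⁻¹ * Real.sqrt (qn q (m13 - x) / qn q (m13 - m23 + 1)) * qn q (m13 + m33 + 1) : ℝ) : ℂ) •
          bv m13 m23 m33 1 x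
        - ((q⁻¹ * Real.sqrt (qn q (x - m23 + 1) * qn q (m13 - m23)) *
            (qn q (m23 + m33) / qn q (m13 - m23 + 1)) : ℝ) : ℂ) • bv m13 m23 m33 2 x
  hE32₀ : ∀ x : ℤ, InR m13 m23 m33 0 x →
    E32 (bv m13 m23 m33 0 x) =
      ((Real.sqrt (qn q (x - m23 + 1) / qn q (m13 - m23 + 1)) : ℝ) : ℂ) • bv m13 m23 m33 1 x
        + ((Real.sqrt (qn q (m13 - x) * qn q (m13 - m23)) / qn q (m13 - m23 + 1) : ℝ) : ℂ) •
            bv m13 m23 m33 2 x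
  hE32₁ : ∀ x : ℤ, InR m13 m23 m33 1 x →
    E32 (bv m13 m23 m33 1 x) =
      ((q * Real.sqrt (qn q (m13 - x) / qn q (m13 - m23 + 1)) : ℝ) : ℂ) • bv m13 m23 m33 3 x
  hE32₂ : ∀ x : ℤ, InR m13 m23 m33 2 x →
    E32 (bv m13 m23 m33 2 x) =
      -(((q * Real.sqrt (qn q (x - m23 + 1) / qn q (m13 - m23)) : ℝ) : ℂ) • bv m13 m23 m33 3 x)
  hE32₃ : ∀ x : ℤ, InR m13 m23 m33 3 x → E32 (bv m13 m23 m33 3 x) = 0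

theorem qn_inv (q : ℝ) (x : ℤ) : qn q⁻¹ x = qn q x := by
  unfold qn
  rw [inv_zpow', inv_zpow', neg_neg, inv_inv, ← neg_sub (q ^ x), ← neg_sub q, neg_div_neg_eq]

theorem qn_zero (q : ℝ) : qn q 0 = 0 := by simp [qn]

theorem qn_pos {q : ℝ} (hq : 0 < q) (hq1 : q ≠ 1) {x : ℤ} (hx : 0 < x) : 0 < qn q x := by
  have key : ∀ r : ℝ, 1 < r → 0 < qn r x := by
    intro r hr
    unfold qn
    have h1 : r ^ (-x) < r ^ x := zpow_lt_zpow_right₀ hr (by omega)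
    have h2 : r⁻¹ < r := (inv_lt_one_of_one_lt₀ hr).trans hr
    exact div_pos (sub_pos.2 h1) (sub_pos.2 h2)
  rcases lt_or_gt_of_ne hq1 with h | h
  · rw [← qn_inv]
    exact key _ ((one_lt_inv₀ hq).2 h)
  · exact key q h

theorem qn_nonneg {q : ℝ} (hq : 0 < q) (hq1 : q ≠ 1) {x : ℤ} (hx : 0 ≤ x) : 0 ≤ qn q x := by
  rcases hx.eq_or_lt with h | h
  · rw [← h, qn_zero]
  · exact (qn_pos hq hq1 h).le

/-- The identity `a A + b B = c [m13 + m23 + m33 - x]`; both sides are the same Laurent polynomial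
in `q`, `q ^ x` and the `q ^ mi3` after clearing the common factor `(q - q⁻¹)⁻²`. -/
theorem qn_identity {q : ℝ} (hq : 0 < q) (m13 m23 m33 x : ℤ) :
    qn q (x - m23 + 1) * qn q (m23 + m33) + qn q (m13 - x) * qn q (m13 + m33 + 1) =
      qn q (m13 - m23 + 1) * qn q (m13 + m23 + m33 - x) := by
  have h0 : q ≠ 0 := hq.ne'
  unfold qn
  simp only [div_mul_div_comm, ← add_div]
  congr 1
  simp only [sub_mul, mul_sub, ← zpow_add₀ h0]
  ring_nf

/-- The sector-independent form of the eigenvalue: `(a A + b B) / c`, with the numbers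
`a, b, c` written as squares of their square roots. -/
theorem diag_coeff {q : ℝ} (hq : 0 < q) (hq1 : q ≠ 1) {m13 m23 m33 x : ℤ} (hm : m23 ≤ m13)
    (h1 : m23 - 1 ≤ x) (h2 : x ≤ m13) :
    (√(qn q (x - m23 + 1)) ^ 2 * qn q (m23 + m33) + √(qn q (m13 - x)) ^ 2 * qn q (m13 + m33 + 1)) /
      √(qn q (m13 - m23 + 1)) ^ 2 = qn q (m13 + m23 + m33 - x) := by
  have hc : 0 < qn q (m13 - m23 + 1) := qn_pos hq hq1 (by omega)
  rw [Real.sq_sqrt (qn_nonneg hq hq1 (by omega)), Real.sq_sqrt (qn_nonneg hq hq1 (by omega)),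
    Real.sq_sqrt hc.le, qn_identity hq, mul_div_cancel_left₀ _ hc.ne']

theorem inR_iff (m13 m23 m33 : ℤ) (k : Fin 4) (x : ℤ) : InR m13 m23 m33 k x ↔
    (trip m13 m23 m33 k).2.1 ≤ x ∧ x ≤ (trip m13 m23 m33 k).1 := Iff.rfl

theorem bv_out {m13 m23 m33 : ℤ} {k : Fin 4} {x : ℤ} (h : ¬ InR m13 m23 m33 k x) :
    bv m13 m23 m33 k x = 0 := dif_neg h

/-- The operators on `W` satisfy the quantum Cartan--Kac
anticommutation relation `{E23, E32} = [h2]` with `h2 = E22 + E33`: on every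
basis vector `v(k, m11)`, `(E23 E32 + E32 E23) v(k,m11) =
[m12 + m22 + m32 − m11] • v(k,m11)`, where `(m12,m22,m32)` is the triple
attached to `k` (hence `m12 + m22 + m32 − m11` is the eigenvalue of
`E22 + E33` on `v(k,m11)`). -/
theorem stmt_6 (q : ℝ) (hq : 0 < q) (hq1 : q ≠ 1)
    (m13 m23 m33 : ℤ) (hm : m23 ≤ m13) (R : GZ q m13 m23 m33) :
    ∀ (k : Fin 4) (x : ℤ), InR m13 m23 m33 k x →
      (R.E23 ∘ₗ R.E32 + R.E32 ∘ₗ R.E23) (bv m13 m23 m33 k x) =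
        ((qn q (M12 m13 m23 m33 k + M22 m13 m23 m33 k + M32 m13 m23 m33 k - x) : ℝ) : ℂ) •
          bv m13 m23 m33 k x := by
  intro k x hx
  have hcpos : 0 < qn q (m13 - m23 + 1) := qn_pos hq hq1 (by omega)
  have hd0 : 0 ≤ qn q (m13 - m23) := qn_nonneg hq hq1 (by omega)
  have hrange : m23 - 1 ≤ x ∧ x ≤ m13 := by
    fin_cases k <;> simp [inR_iff, trip] at hx <;> omega
  have ha0 : 0 ≤ qn q (x - m23 + 1) := qn_nonneg hq hq1 (by omega)
  have hb0 : 0 ≤ qn q (m13 - x) := qn_nonneg hq hq1 (by omega)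
  have hdiag := diag_coeff (m33 := m33) hq hq1 hm hrange.1 hrange.2
  have hM : M12 m13 m23 m33 k + M22 m13 m23 m33 k + M32 m13 m23 m33 k - x
      = m13 + m23 + m33 - x := by
    fin_cases k <;> simp [M12, M22, M32, trip] <;> ring
  rw [hM]
  have e230 := R.hE23₀ x
  have e231 := R.hE23₁ x
  have e232 := R.hE23₂ x
  have e233 := R.hE23₃ x
  have e320 := R.hE32₀ x
  have e321 := R.hE32₁ x
  have e322 := R.hE32₂ x
  have e323 := R.hE32₃ x
  simp only [Real.sqrt_div ha0, Real.sqrt_div hb0, Real.sqrt_mul ha0, Real.sqrt_mul hb0]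
    at e231 e232 e233 e320 e321 e322
  have hcs : qn q (m13 - m23 + 1) = √(qn q (m13 - m23 + 1)) ^ 2 := (Real.sq_sqrt hcpos.le).symm
  have hsc : √(qn q (m13 - m23 + 1)) ≠ 0 := (Real.sqrt_pos.2 hcpos).ne'
  have hsa : x = m23 - 1 → √(qn q (x - m23 + 1)) = 0 := by
    rintro rfl; simp [qn_zero]
  have hsb : x = m13 → √(qn q (m13 - x)) = 0 := by
    rintro rfl; simp [qn_zero]
  have hsd : m23 < m13 → √(qn q (m13 - m23)) ≠ 0 := fun h =>
    (Real.sqrt_pos.2 (qn_pos hq hq1 (by omega))).ne'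
  have hq0 : q ≠ 0 := hq.ne'
  generalize √(qn q (x - m23 + 1)) = sa at *
  generalize √(qn q (m13 - x)) = sb at *
  generalize √(qn q (m13 - m23)) = sd at *
  generalize √(qn q (m13 - m23 + 1)) = sc at *
  rw [hcs] at e233 e320
  generalize qn q (m23 + m33) = A at *
  generalize qn q (m13 + m33 + 1) = B at *
  rw [← hdiag]
  simp only [inR_iff, trip] at e230 e231 e232 e233 e320 e321 e322 e323
  -- Sector `1` has the largest range, `m23 - 1 ≤ x ≤ m13`, so its vector never drops out.
  have o0 : ¬ (m23 ≤ x) → bv m13 m23 m33 0 x = 0 := fun h =>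
    bv_out (by simp only [inR_iff, trip]; omega)
  have o2 : ¬ (m23 ≤ x ∧ x ≤ m13 - 1) → bv m13 m23 m33 2 x = 0 := fun h =>
    bv_out (by simpa only [inR_iff, trip] using h)
  have o3 : ¬ (x ≤ m13 - 1) → bv m13 m23 m33 3 x = 0 := fun h =>
    bv_out (by simp only [inR_iff, trip]; omega)
  -- From here on `sa, sb, sc, sd` are `√a, √b, √c, √d`, and every term is a rational expression
  -- in them; `sd ≠ 0` is available exactly when sector `2` is nonempty.
  rw [LinearMap.add_apply, LinearMap.comp_apply, LinearMap.comp_apply]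
  have hsc' : (sc : ℂ) ≠ 0 := Complex.ofReal_ne_zero.2 hsc
  have hq' : (q : ℂ) ≠ 0 := Complex.ofReal_ne_zero.2 hq0
  have hsd' : m23 < m13 → (sd : ℂ) ≠ 0 := fun h => Complex.ofReal_ne_zero.2 (hsd h)
  fin_cases k <;> simp only [inR_iff, trip, Fin.zero_eta, Fin.mk_one, Fin.reduceFinMk] at hx ⊢
  · rw [e230 hx, e320 hx, map_add, map_smul, map_smul, e231 (by omega), map_zero]
    by_cases h : x = m13
    · rw [hsb h, o2 (by omega), map_zero, smul_zero]
      push_cast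
      match_scalars
      field_simp
      ring
    · have := hsd' (by omega)
      rw [e232 (by omega)]
      push_cast
      match_scalars
      field_simp
  · rw [e231 hx, e321 hx, map_smul, map_smul]
    by_cases h : x = m13
    · by_cases h' : x = m23 - 1
      · omega
      · rw [o3 (by omega), e320 (by omega), hsb h]
        push_cast
        match_scalars <;> field_simp <;> simp
    · by_cases h' : x = m23 - 1
      · rw [hsa h', o0 (by omega), e233 (by omega), hsa h']
        push_cast
        match_scalars <;> field_simp <;> simp
      · rw [e233 (by omega), e320 (by omega)]
        push_cast
        match_scalars <;> field_simp <;> ring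
  · have := hsd' (by omega)
    rw [e232 hx, e322 hx, map_neg, map_smul, map_smul, e233 (by omega), e320 (by omega)]
    push_cast
    match_scalars <;> field_simp <;> ring
  · rw [e323 hx, e233 hx, map_sub, map_smul, map_smul, e321 (by omega), map_zero]
    by_cases h' : x = m23 - 1
    · rw [hsa h', o2 (by omega), map_zero, smul_zero]
      push_cast
      match_scalars
      field_simp
      ring
    · have := hsd' (by omega)
      rw [e322 (by omega)]
      push_cast
      match_scalars
      field_simp
      ring
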